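/- For suitable (sufficiently large) absolute constants C₁, C₂ in the definition of E_t, there exists an absolute constant C > 0 such that for every t ∈ [T], ∫_{E_t^c} p_{X_t^GMM}(x) dx ≤ C T^{−3}, i.e., P{X_t^GMM ∉ E_t} ≤ C T^{−3}. -/

import Mathlib

open MeasureTheory Real Finset
open scoped RealInnerProductSpace BigOperators

noncomputable section

/-- Density of the Gaussian distribution `N(m, v I_d)` on `ℝ^d`. -/
def gaussV (d : ℕ) (v : ℝ) (m x : EuclideanSpace ℝ (Fin d)) : ℝ :=
  (2 * Real.pi * v) ^ (-(d : ℝ) / 2) * Real.exp (-‖x - m‖ ^ 2 / (2 * v))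

/-- Density of the Gaussian mixture `∑_k w_k N(√abar μ_k, I_d)`. -/
def mixDensity (d K : ℕ) (w : Fin K → ℝ) (μ : Fin K → EuclideanSpace ℝ (Fin d))
    (abar : ℝ) (x : EuclideanSpace ℝ (Fin d)) : ℝ :=
  ∑ k, w k * gaussV d 1 (Real.sqrt abar • μ k) x

/-- Posterior component weights `π_k^{(t)}(x)`. -/
def postWeight (d K : ℕ) (w : Fin K → ℝ) (μ : Fin K → EuclideanSpace ℝ (Fin d))
    (abar : ℝ) (k : Fin K) (x : EuclideanSpace ℝ (Fin d)) : ℝ :=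
  w k * Real.exp (-‖x - Real.sqrt abar • μ k‖ ^ 2 / 2) /
    ∑ i, w i * Real.exp (-‖x - Real.sqrt abar • μ i‖ ^ 2 / 2)

/-- Closed form of the score `∇ log p_{X_t^GMM}` of the diffused GMM. -/
def gmmScore (d K : ℕ) (w : Fin K → ℝ) (μ : Fin K → EuclideanSpace ℝ (Fin d))
    (abar : ℝ) (x : EuclideanSpace ℝ (Fin d)) : EuclideanSpace ℝ (Fin d) :=
  -x + Real.sqrt abar • ∑ k, postWeight d K w μ abar k x • μ k

/-- The Jacobian matrix `J_t(x)` of the diffused GMM score. -/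
def gmmJac (d K : ℕ) (w : Fin K → ℝ) (μ : Fin K → EuclideanSpace ℝ (Fin d))
    (abar : ℝ) (x : EuclideanSpace ℝ (Fin d)) : Matrix (Fin d) (Fin d) ℝ :=
  Matrix.of fun i j =>
    (if i = j then (-1 : ℝ) else 0) +
      abar * ((∑ k, postWeight d K w μ abar k x * (μ k i * μ k j)) -
        (∑ k, postWeight d K w μ abar k x * μ k i) *
          (∑ k, postWeight d K w μ abar k x * μ k j))

/-- The quantity `ζ_k^{(t)}(x)`, where `abar` plays the role of `ᾱ_t` and `a` that of `α_t`. -/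
def zeta (d K : ℕ) (w : Fin K → ℝ) (μ : Fin K → EuclideanSpace ℝ (Fin d))
    (abar a : ℝ) (k : Fin K) (x : EuclideanSpace ℝ (Fin d)) : ℝ :=
  (1 - a ^ 2) / (2 * a ^ 2) *
      (‖x - Real.sqrt abar • μ k‖ ^ 2 -
        ∑ i, postWeight d K w μ abar i x * ‖x - Real.sqrt abar • μ i‖ ^ 2) +
    (1 - a) / a ^ 2 *
      ⟪gmmScore d K w μ abar x,
        ∑ i, postWeight d K w μ abar i x • (Real.sqrt abar • (μ i - μ k))⟫

/-- The typical set `E_t`. -/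
def Eset (d K T : ℕ) (w : Fin K → ℝ) (μ : Fin K → EuclideanSpace ℝ (Fin d))
    (abar a C₁ C₂ : ℝ) : Set (EuclideanSpace ℝ (Fin d)) :=
  {x | Matrix.trace (1 + gmmJac d K w μ abar x) ≤ C₁ * Real.log ((K : ℝ) * T) ∧
    ∑ k, postWeight d K w μ abar k x * Real.exp (-(zeta d K w μ abar a k x)) ≤
      Real.exp (C₂ * (1 - a) ^ 2 * Real.log ((K : ℝ) * T) ^ 2)}

/-- The set `A_t`. -/
def Aset (d K T : ℕ) (w : Fin K → ℝ) (μ : Fin K → EuclideanSpace ℝ (Fin d))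
    (abar cR C₇ : ℝ) : Set (EuclideanSpace ℝ (Fin d)) :=
  {x | -(C₇ * d * Real.log ((d : ℝ) * T)) ≤ Real.log (mixDensity d K w μ abar x) ∧
    ‖x‖ ≤ Real.sqrt (2 * (T : ℝ) ^ (2 * cR) + 16 * d * Real.log T)}

/-- The set `T_k`. -/
def Tset (d K T : ℕ) (μ : Fin K → EuclideanSpace ℝ (Fin d))
    (abar C₅ : ℝ) (k : Fin K) : Set (EuclideanSpace ℝ (Fin d)) :=
  {x | ∀ i : Fin K,
    |⟪x - Real.sqrt abar • μ k, Real.sqrt abar • (μ i - μ k)⟫| ≤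
      C₅ * Real.sqrt (abar * Real.log ((K : ℝ) * T)) * ‖μ i - μ k‖}

/-- Forward (diffused) marginal density at noise level `abar`, starting from density `f₀`. -/
def fwdDensity (d : ℕ) (f₀ : EuclideanSpace ℝ (Fin d) → ℝ) (abar : ℝ)
    (x : EuclideanSpace ℝ (Fin d)) : ℝ :=
  ∫ y, gaussV d (1 - abar) (Real.sqrt abar • y) x * f₀ y

/-- Stein score of a density `p`. -/
def scoreOf (d : ℕ) (p : EuclideanSpace ℝ (Fin d) → ℝ)
    (x : EuclideanSpace ℝ (Fin d)) : EuclideanSpace ℝ (Fin d) :=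
  gradient (fun y => Real.log (p y)) x

/-- Truncation (clipping) of a score estimate at radius `R`. -/
def clipFn (d : ℕ) (R : ℝ) (s : EuclideanSpace ℝ (Fin d) → EuclideanSpace ℝ (Fin d))
    (x : EuclideanSpace ℝ (Fin d)) : EuclideanSpace ℝ (Fin d) :=
  if ‖s x‖ ≤ R then s x else 0

/-- Total-variation distance between two densities on `ℝ^d`. -/
def tvDist (d : ℕ) (p q : EuclideanSpace ℝ (Fin d) → ℝ) : ℝ :=
  (1 / 2) * ∫ x, |p x - q x|

/-- Density of the one-step (DDPM-type) reverse Gaussian transition with rate `a`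
and drift field `s`, from `y` to `x`. -/
def ddpmKernel (d : ℕ) (a : ℝ) (s : EuclideanSpace ℝ (Fin d) → EuclideanSpace ℝ (Fin d))
    (y x : EuclideanSpace ℝ (Fin d)) : ℝ :=
  gaussV d (1 - a) ((Real.sqrt a)⁻¹ • (y + (1 - a) • s y)) x

/-- Density of `Y_{T-n}` for the DDPM sampler run with rates `α` and score estimates `s`. -/
def ddpmDensity (d T : ℕ) (α : ℕ → ℝ)
    (s : ℕ → EuclideanSpace ℝ (Fin d) → EuclideanSpace ℝ (Fin d)) :
    ℕ → EuclideanSpace ℝ (Fin d) → ℝ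
  | 0 => gaussV d 1 0
  | n + 1 => fun x =>
      ∫ y, ddpmKernel d (α (T - n)) (s (T - n)) y x * ddpmDensity d T α s n y

/-- Density (on `ℝ^d`) of `Ȳ_{T-n}^-` for the auxiliary reverse process. -/
def pbarMinus (d K T : ℕ) (w : Fin K → ℝ) (μ : Fin K → EuclideanSpace ℝ (Fin d))
    (αbar α : ℕ → ℝ) (C₁ C₂ : ℝ) : ℕ → EuclideanSpace ℝ (Fin d) → ℝ
  | 0 => (Eset d K T w μ (αbar T) (α T) C₁ C₂).indicator (gaussV d 1 0)
  | n + 1 =>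
      (Eset d K T w μ (αbar (T - n)) (α (T - n)) C₁ C₂).indicator fun x =>
        ∫ y in Eset d K T w μ (αbar (T - n)) (α (T - n)) C₁ C₂,
          ddpmKernel d (α (T - n)) (gmmScore d K w μ (αbar (T - n))) y x *
            min (mixDensity d K w μ (αbar (T - n)) y)
              (pbarMinus d K T w μ αbar α C₁ C₂ n y)

/-- The function `Δ_t(x) = p_{X_t^GMM}(x) - p_{Ȳ_t}(x)`. -/
def DeltaFn (d K T : ℕ) (w : Fin K → ℝ) (μ : Fin K → EuclideanSpace ℝ (Fin d))
    (αbar α : ℕ → ℝ) (C₁ C₂ : ℝ) (t : ℕ) (x : EuclideanSpace ℝ (Fin d)) : ℝ :=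
  mixDensity d K w μ (αbar t) x -
    min (mixDensity d K w μ (αbar t) x) (pbarMinus d K T w μ αbar α C₁ C₂ (T - t) x)

end

lemma exp_quad_bound (y : ℝ) : Real.exp y ≤ 1 + y + y ^ 2 * Real.exp |y| := by
  rcases le_or_gt 0 y with h | h
  · rw [abs_of_nonneg h]
    have h1 : 1 - y ≤ Real.exp (-y) := by linarith [Real.add_one_le_exp (-y)]
    have h2 : Real.exp (-y) * Real.exp y = 1 := by rw [← Real.exp_add]; simp
    have h3 : (1 - y) * Real.exp y ≤ 1 :=
      (mul_le_mul_of_nonneg_right h1 (Real.exp_pos y).le).trans_eq h2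
    nlinarith [Real.exp_pos y]
  · have h1 : 1 - y ≤ Real.exp (-y) := by linarith [Real.add_one_le_exp (-y)]
    have h2 : Real.exp (-y) * Real.exp y = 1 := by rw [← Real.exp_add]; simp
    have h3 : (1 - y) * Real.exp y ≤ 1 :=
      (mul_le_mul_of_nonneg_right h1 (Real.exp_pos y).le).trans_eq h2
    have h4 : (1:ℝ) ≤ Real.exp |y| := Real.one_le_exp (abs_nonneg y)
    have h5 : Real.exp y ≤ 1 + y + y ^ 2 := by
      have : (1 - y) * Real.exp y ≤ (1 - y) * (1 + y + y ^ 2) := by nlinarith [pow_pos (neg_pos.2 h) 3]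
      exact le_of_mul_le_mul_left this (by linarith)
    nlinarith [sq_nonneg y]

lemma jensen_exp {ι : Type*} [Fintype ι] (p g : ι → ℝ) (hp : ∀ i, 0 ≤ p i) (hs : ∑ i, p i = 1) :
    Real.exp (∑ i, p i * g i) ≤ ∑ i, p i * Real.exp (g i) := by
  have := convexOn_exp.map_sum_le (t := Finset.univ) (w := p) (p := g) (fun i _ => hp i) hs
    (fun i _ => Set.mem_univ _)
  simpa using this

lemma jensen_sq {ι E : Type*} [Fintype ι] [NormedAddCommGroup E] [InnerProductSpace ℝ E]
    (p : ι → ℝ) (g : ι → E) (hp : ∀ i, 0 ≤ p i) (hs : ∑ i, p i = 1) :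
    ‖∑ i, p i • g i‖ ^ 2 ≤ ∑ i, p i * ‖g i‖ ^ 2 := by
  have h1 : ConvexOn ℝ Set.univ (fun v : E => ‖v‖ ^ 2) :=
    (convexOn_univ_norm).pow (fun _ _ => norm_nonneg _) 2
  have := h1.map_sum_le (t := Finset.univ) (w := p) (p := g) (fun i _ => hp i) hs
    (fun i _ => Set.mem_univ _)
  simpa using this

/-- Deterministic pointwise bound. -/
lemma pt_bound (Y b L : ℝ) (hY : 0 ≤ Y) (hb : 0 ≤ b) (hb' : b ≤ 1 / 64) (hL : 0 ≤ L) :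
    Y ^ 2 * Real.exp (b * Y) ≤
      2 ^ 20 * L ^ 2 * Real.exp (1024 * (b * L)) + 2 ^ 15 * (Real.exp (Y / 32) * Real.exp (-(8 * L))) := by
  rcases le_or_gt Y (1024 * L) with h | h
  · have h1 : Y ^ 2 * Real.exp (b * Y) ≤ (1024 * L) ^ 2 * Real.exp (1024 * (b * L)) := by
      apply mul_le_mul
      · exact pow_le_pow_left₀ hY h 2
      · apply Real.exp_le_exp.2; nlinarith
      · positivity
      · positivity
    have h2 : 0 ≤ 2 ^ 15 * (Real.exp (Y / 32) * Real.exp (-(8 * L))) := by positivity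
    nlinarith
  · have h1 : Real.exp (b * Y) ≤ Real.exp (Y / 64) := by apply Real.exp_le_exp.2; nlinarith
    have h2 : Y ^ 2 ≤ 2 ^ 15 * Real.exp (Y / 128) := by
      have := Real.quadratic_le_exp_of_nonneg (x := Y / 128) (by positivity)
      nlinarith
    have h3 : Y ^ 2 * Real.exp (b * Y) ≤ 2 ^ 15 * Real.exp (Y / 128) * Real.exp (Y / 64) :=
      mul_le_mul h2 h1 (Real.exp_pos _).le (by positivity)
    have h4 : Real.exp (Y / 128) * Real.exp (Y / 64) ≤ Real.exp (Y / 32) * Real.exp (-(8 * L)) := by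
      rw [← Real.exp_add, ← Real.exp_add]; apply Real.exp_le_exp.2; linarith
    have h5 : 0 ≤ 2 ^ 20 * L ^ 2 * Real.exp (1024 * (b * L)) := by positivity
    nlinarith

lemma final_exp (y : ℝ) (hy : 0 ≤ y) :
    1 + 2 ^ 21 * y ^ 2 * Real.exp (1024 * y) ≤ Real.exp (2 ^ 23 * y ^ 2) := by
  rcases le_or_gt (1024 * y) 1 with h | h
  · have h1 : Real.exp (1024 * y) ≤ 4 := by
      calc Real.exp (1024 * y) ≤ Real.exp 1 := Real.exp_le_exp.2 h
        _ ≤ 4 := by linarith [Real.exp_one_lt_d9]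
    have h2 := Real.add_one_le_exp (2 ^ 23 * y ^ 2)
    nlinarith [sq_nonneg y]
  · have h1 := Real.add_one_le_exp (2 ^ 21 * y ^ 2)
    have h2 : (1:ℝ) ≤ Real.exp (1024 * y) := Real.one_le_exp (by positivity)
    calc 1 + 2 ^ 21 * y ^ 2 * Real.exp (1024 * y) ≤ (2 ^ 21 * y ^ 2 + 1) * Real.exp (1024 * y) := by
          nlinarith
      _ ≤ Real.exp (2 ^ 21 * y ^ 2) * Real.exp (1024 * y) :=
          mul_le_mul_of_nonneg_right h1 (Real.exp_pos _).le
      _ ≤ Real.exp (2 ^ 23 * y ^ 2) := by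
          rw [← Real.exp_add]; apply Real.exp_le_exp.2; nlinarith

/-- Finite-probability lemma controlling the exponential moment of a centred variable. -/
lemma finite_mgf {ι : Type*} [Fintype ι] (p g : ι → ℝ) (hp : ∀ i, 0 ≤ p i) (hs : ∑ i, p i = 1)
    (R b : ℝ) (hR : 2 ≤ R) (hb : 0 ≤ b) (hb' : b ≤ 1 / 64)
    (hg : ∑ i, p i * Real.exp (|g i| / 32) ≤ 2 * R ^ 3) :
    ∑ i, p i * Real.exp (b * (g i - ∑ j, p j * g j)) ≤
      Real.exp (2 ^ 23 * b ^ 2 * Real.log R ^ 2) := by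
  set m := ∑ j, p j * g j with hm
  set L := Real.log R with hL
  have hRpos : 0 < R := by linarith
  have hL2 : 1 / 2 ≤ L := by
    have : Real.log 2 ≤ L := Real.log_le_log (by norm_num) hR
    linarith [Real.log_two_gt_d9]
  have hN : Real.exp (|m| / 32) ≤ 2 * R ^ 3 := by
    refine le_trans ?_ hg
    refine le_trans ?_ (jensen_exp p (fun i => |g i| / 32) hp hs)
    apply Real.exp_le_exp.2
    have : |m| ≤ ∑ i, p i * |g i| := by
      refine (Finset.abs_sum_le_sum_abs _ _).trans (le_of_eq ?_)
      refine Finset.sum_congr rfl fun i _ => ?_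
      rw [abs_mul, abs_of_nonneg (hp i)]
    calc |m| / 32 ≤ (∑ i, p i * |g i|) / 32 := by linarith
      _ = _ := by rw [Finset.sum_div]; exact Finset.sum_congr rfl fun i _ => by ring
  have hE : ∑ i, p i * Real.exp (|g i - m| / 32) ≤ R ^ 8 := by
    calc ∑ i, p i * Real.exp (|g i - m| / 32)
        ≤ ∑ i, p i * (Real.exp (|g i| / 32) * Real.exp (|m| / 32)) := by
          refine Finset.sum_le_sum fun i _ => mul_le_mul_of_nonneg_left ?_ (hp i)
          rw [← Real.exp_add]; apply Real.exp_le_exp.2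
          linarith [abs_sub (g i) m]
      _ = (∑ i, p i * Real.exp (|g i| / 32)) * Real.exp (|m| / 32) := by
          rw [Finset.sum_mul]; exact Finset.sum_congr rfl fun i _ => by ring
      _ ≤ (2 * R ^ 3) * (2 * R ^ 3) := by
          apply mul_le_mul hg hN (Real.exp_pos _).le (by positivity)
      _ ≤ R ^ 8 := by
          have : R ^ 6 * 4 ≤ R ^ 6 * R ^ 2 := mul_le_mul_of_nonneg_left (by nlinarith) (by positivity)
          nlinarith
  have hexpL : Real.exp (-(8 * L)) * R ^ 8 = 1 := by
    rw [Real.exp_neg, hL, show (8:ℝ) * Real.log R = Real.log (R ^ 8) by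
      rw [Real.log_pow]; norm_num, Real.exp_log (by positivity)]
    field_simp
  have hA : ∑ i, p i * (|g i - m| ^ 2 * Real.exp (b * |g i - m|)) ≤
      2 ^ 21 * L ^ 2 * Real.exp (1024 * (b * L)) := by
    calc ∑ i, p i * (|g i - m| ^ 2 * Real.exp (b * |g i - m|))
        ≤ ∑ i, p i * (2 ^ 20 * L ^ 2 * Real.exp (1024 * (b * L)) +
            2 ^ 15 * (Real.exp (|g i - m| / 32) * Real.exp (-(8 * L)))) :=
          Finset.sum_le_sum fun i _ => mul_le_mul_of_nonneg_left
            (pt_bound _ _ _ (abs_nonneg _) hb hb' (by linarith)) (hp i)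
      _ = 2 ^ 20 * L ^ 2 * Real.exp (1024 * (b * L)) * (∑ i, p i) +
            2 ^ 15 * (Real.exp (-(8 * L)) * ∑ i, p i * Real.exp (|g i - m| / 32)) := by
          rw [Finset.mul_sum, Finset.mul_sum, Finset.mul_sum, ← Finset.sum_add_distrib]
          exact Finset.sum_congr rfl fun i _ => by ring
      _ ≤ 2 ^ 20 * L ^ 2 * Real.exp (1024 * (b * L)) * 1 + 2 ^ 15 * 1 := by
          rw [hs, ← hexpL]
          have := mul_le_mul_of_nonneg_left hE (Real.exp_pos (-(8 * L))).le
          linarith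
      _ ≤ 2 ^ 21 * L ^ 2 * Real.exp (1024 * (b * L)) := by
          have h1 : (1:ℝ) ≤ Real.exp (1024 * (b * L)) := Real.one_le_exp (by positivity)
          have h2 : 1 / 4 ≤ L ^ 2 := by nlinarith
          nlinarith
  calc ∑ i, p i * Real.exp (b * (g i - m))
      ≤ ∑ i, p i * (1 + b * (g i - m) + (b * (g i - m)) ^ 2 * Real.exp |b * (g i - m)|) :=
        Finset.sum_le_sum fun i _ => mul_le_mul_of_nonneg_left (exp_quad_bound _) (hp i)
    _ = (∑ i, p i) + b * ((∑ i, p i * g i) - m * ∑ i, p i) +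
          b ^ 2 * ∑ i, p i * (|g i - m| ^ 2 * Real.exp (b * |g i - m|)) := by
        rw [Finset.mul_sum, ← Finset.sum_sub_distrib, Finset.mul_sum, Finset.mul_sum,
          ← Finset.sum_add_distrib, ← Finset.sum_add_distrib]
        refine Finset.sum_congr rfl fun i _ => ?_
        rw [abs_mul, abs_of_nonneg hb, sq_abs]; ring
    _ = 1 + b ^ 2 * ∑ i, p i * (|g i - m| ^ 2 * Real.exp (b * |g i - m|)) := by
        rw [hs, ← hm]; ring
    _ ≤ 1 + b ^ 2 * (2 ^ 21 * L ^ 2 * Real.exp (1024 * (b * L))) := by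
        have := mul_le_mul_of_nonneg_left hA (sq_nonneg b)
        linarith
    _ = 1 + 2 ^ 21 * (b * L) ^ 2 * Real.exp (1024 * (b * L)) := by ring
    _ ≤ Real.exp (2 ^ 23 * (b * L) ^ 2) := final_exp _ (by positivity)
    _ = _ := by congr 1; ring

/-- Bound on the initial value of the schedule and range of the schedule. -/
lemma schedule (T : ℕ) (x r : ℝ) (hx : 0 ≤ x) (hx1 : x ≤ 1) (αbar : ℕ → ℝ)
    (h0 : 0 < αbar T) (h1 : αbar T ≤ 1) (hr : r ≤ αbar T) (hr0 : 0 ≤ r)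
    (hrec : ∀ t : ℕ, 2 ≤ t → t ≤ T → αbar (t - 1) = αbar t + x * αbar t * (1 - αbar t)) :
    ∀ n : ℕ, n + 1 ≤ T → 0 < αbar (T - n) ∧ αbar (T - n) ≤ 1 ∧
      r * (1 + x) ^ n * (1 - αbar (T - n)) ≤ αbar (T - n) := by
  intro n
  induction n with
  | zero =>
    intro _
    refine ⟨h0, h1, ?_⟩
    simp only [pow_zero, Nat.sub_zero, mul_one]
    nlinarith
  | succ n ih =>
    intro hn
    obtain ⟨i1, i2, i3⟩ := ih (by omega)
    have hh := hrec (T - n) (by omega) (by omega)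
    rw [show T - n - 1 = T - (n + 1) by omega] at hh
    rw [hh]
    set y := αbar (T - n)
    have hxy : 0 ≤ x * y := by positivity
    have hy : 0 ≤ 1 - y := by linarith
    have hxy' : 0 ≤ 1 - x * y := by nlinarith
    refine ⟨by nlinarith [mul_nonneg hxy hy], ?_, ?_⟩
    · nlinarith [mul_nonneg hxy' hy]
    · have e : r * (1 + x) ^ (n + 1) * (1 - (y + x * y * (1 - y))) =
          (r * (1 + x) ^ n * (1 - y)) * ((1 + x) * (1 - x * y)) := by ring
      rw [e]
      calc _ ≤ y * ((1 + x) * (1 - x * y)) := mul_le_mul_of_nonneg_right i3 (by positivity)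
        _ ≤ y + x * y * (1 - y) := by nlinarith [mul_nonneg hxy hxy]

lemma mean_sq {ι E : Type*} [Fintype ι] [NormedAddCommGroup E] [InnerProductSpace ℝ E]
    (p : ι → ℝ) (u : ι → E) (hs : ∑ i, p i = 1) (x : E) :
    ∑ i, p i * ‖x - u i‖ ^ 2 = ‖x - ∑ j, p j • u j‖ ^ 2 +
      ∑ i, p i * ‖u i - ∑ j, p j • u j‖ ^ 2 := by
  set m := ∑ j, p j • u j with hm
  have h0 : ∑ i, p i * ⟪x - m, u i - m⟫ = 0 := by
    have : ∑ i, p i * ⟪x - m, u i - m⟫ = ⟪x - m, ∑ i, p i • (u i - m)⟫ := by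
      rw [inner_sum]; exact Finset.sum_congr rfl fun i _ => by rw [real_inner_smul_right]
    rw [this]
    have : ∑ i, p i • (u i - m) = 0 := by
      simp only [smul_sub, Finset.sum_sub_distrib, ← Finset.sum_smul, hs, one_smul, ← hm, sub_self]
    rw [this, inner_zero_right]
  have h1 : ∀ i, ‖x - u i‖ ^ 2 = ‖x - m‖ ^ 2 - 2 * ⟪x - m, u i - m⟫ + ‖u i - m‖ ^ 2 := by
    intro i
    rw [show x - u i = (x - m) - (u i - m) by abel, norm_sub_sq_real]
  calc ∑ i, p i * ‖x - u i‖ ^ 2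
      = ‖x - m‖ ^ 2 * (∑ i, p i) - 2 * (∑ i, p i * ⟪x - m, u i - m⟫) +
          ∑ i, p i * ‖u i - m‖ ^ 2 := by
        rw [Finset.mul_sum, Finset.mul_sum, ← Finset.sum_sub_distrib, ← Finset.sum_add_distrib]
        exact Finset.sum_congr rfl fun i _ => by rw [h1 i]; ring
    _ = _ := by rw [h0, hs]; ring

section pointwise

variable {d K : ℕ} {w : Fin K → ℝ} {μ : Fin K → EuclideanSpace ℝ (Fin d)} {abar : ℝ}
  {x : EuclideanSpace ℝ (Fin d)}

lemma S_pos (hK : 1 ≤ K) (hw : ∀ k, 0 < w k) :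
    0 < ∑ i, w i * Real.exp (-‖x - Real.sqrt abar • μ i‖ ^ 2 / 2) := by
  have : Nonempty (Fin K) := ⟨⟨0, hK⟩⟩
  exact Finset.sum_pos (fun i _ => mul_pos (hw i) (Real.exp_pos _)) Finset.univ_nonempty

lemma post_nonneg (hw : ∀ k, 0 < w k) (k : Fin K) : 0 ≤ postWeight d K w μ abar k x := by
  unfold postWeight
  exact div_nonneg (mul_nonneg (hw k).le (Real.exp_pos _).le)
    (Finset.sum_nonneg fun i _ => mul_nonneg (hw i).le (Real.exp_pos _).le)

lemma post_sum (hK : 1 ≤ K) (hw : ∀ k, 0 < w k) : ∑ k, postWeight d K w μ abar k x = 1 := by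
  unfold postWeight
  rw [← Finset.sum_div]
  exact div_self (S_pos hK hw).ne'

lemma trace_eq (hK : 1 ≤ K) (hw : ∀ k, 0 < w k) (ha : 0 ≤ abar) :
    Matrix.trace (1 + gmmJac d K w μ abar x) =
      ∑ k, postWeight d K w μ abar k x * ‖Real.sqrt abar • μ k -
        ∑ j, postWeight d K w μ abar j x • (Real.sqrt abar • μ j)‖ ^ 2 := by
  have hs : ∑ k, postWeight d K w μ abar k x = 1 := post_sum hK hw
  generalize hp : (fun k => postWeight d K w μ abar k x) = p at *
  have hp' : ∀ k, postWeight d K w μ abar k x = p k := fun k => congrFun hp k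
  simp only [hp'] at hs ⊢
  have h := mean_sq p μ hs 0
  have e1 : ∑ j, p j • (Real.sqrt abar • μ j) = Real.sqrt abar • ∑ j, p j • μ j := by
    rw [Finset.smul_sum]; exact Finset.sum_congr rfl fun i _ => smul_comm _ _ _
  rw [e1]
  simp only [← smul_sub, norm_smul, mul_pow, Real.norm_eq_abs, sq_abs, Real.sq_sqrt ha]
  simp only [zero_sub, norm_neg] at h
  have h2 : ∑ k, p k * (abar * ‖μ k - ∑ j, p j • μ j‖ ^ 2) =
      abar * (∑ k, p k * ‖μ k‖ ^ 2 - ‖∑ j, p j • μ j‖ ^ 2) := by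
    rw [h, add_sub_cancel_left, Finset.mul_sum]
    exact Finset.sum_congr rfl fun i _ => by ring
  rw [h2]
  simp only [Matrix.trace, Matrix.diag, Matrix.add_apply, Matrix.one_apply_eq, gmmJac, Matrix.of_apply,
    if_true, hp', EuclideanSpace.real_norm_sq_eq]
  simp only [add_neg_cancel_left, ← Finset.mul_sum, Finset.sum_sub_distrib]
  congr 2
  · rw [Finset.sum_comm]
    refine Finset.sum_congr rfl fun i _ => ?_
    rw [Finset.mul_sum]
    exact Finset.sum_congr rfl fun i _ => by ring
  · refine Finset.sum_congr rfl fun i _ => ?_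
    simp [sq]

/-- The quantity whose centred version is `-ζ/(1-a)`. -/
noncomputable def gfun (d K : ℕ) (w : Fin K → ℝ) (μ : Fin K → EuclideanSpace ℝ (Fin d))
    (abar a : ℝ) (x : EuclideanSpace ℝ (Fin d)) (k : Fin K) : ℝ :=
  a⁻¹ * (-‖x - Real.sqrt abar • μ k‖ ^ 2 / 2 -
      Real.log (∑ i, w i * Real.exp (-‖x - Real.sqrt abar • μ i‖ ^ 2 / 2))) -
    (2 * a ^ 2)⁻¹ * ‖Real.sqrt abar • μ k -
        ∑ j, postWeight d K w μ abar j x • (Real.sqrt abar • μ j)‖ ^ 2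

lemma zeta_eq (hK : 1 ≤ K) (hw : ∀ k, 0 < w k) (a : ℝ) (ha : 0 < a) (k : Fin K) :
    -(zeta d K w μ abar a k x) = (1 - a) * (gfun d K w μ abar a x k -
      ∑ j, postWeight d K w μ abar j x * gfun d K w μ abar a x j) := by
  have hs : ∑ k, postWeight d K w μ abar k x = 1 := post_sum hK hw
  unfold zeta gfun gmmScore
  generalize hp : (fun k => postWeight d K w μ abar k x) = p at *
  have hp' : ∀ k, postWeight d K w μ abar k x = p k := fun k => congrFun hp k
  simp only [hp'] at hs ⊢
  have e1 : Real.sqrt abar • ∑ j, p j • μ j = ∑ j, p j • (Real.sqrt abar • μ j) := by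
    rw [Finset.smul_sum]; exact Finset.sum_congr rfl fun i _ => smul_comm _ _ _
  rw [e1]
  have e2 : ∑ i, p i • (Real.sqrt abar • (μ i - μ k)) =
      (∑ j, p j • (Real.sqrt abar • μ j)) - Real.sqrt abar • μ k := by
    simp only [smul_sub, Finset.sum_sub_distrib, ← Finset.sum_smul, hs, one_smul]
  rw [e2]
  generalize hu : (fun k => Real.sqrt abar • μ k) = u at *
  have hu' : ∀ k, Real.sqrt abar • μ k = u k := fun k => congrFun hu k
  simp only [hu'] at *
  generalize Real.log _ = LS
  have h := mean_sq p u hs x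
  set m := ∑ j, p j • u j with hm
  have h3 : ‖x - u k‖ ^ 2 = ‖x - m‖ ^ 2 - 2 * ⟪-x + m, m - u k⟫ + ‖u k - m‖ ^ 2 := by
    rw [show x - u k = (x - m) + (m - u k) by abel, norm_add_sq_real, norm_sub_rev (u k) m,
      show -x + m = -(x - m) by abel, inner_neg_left]
    ring
  have h4 : ∑ j, p j * (a⁻¹ * (-‖x - u j‖ ^ 2 / 2 - LS) - (2 * a ^ 2)⁻¹ * ‖u j - m‖ ^ 2) =
      a⁻¹ * (-(∑ j, p j * ‖x - u j‖ ^ 2) / 2 - LS) -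
        (2 * a ^ 2)⁻¹ * ∑ j, p j * ‖u j - m‖ ^ 2 := by
    have : LS = LS * ∑ j, p j := by rw [hs, mul_one]
    rw [neg_div, Finset.sum_div]
    conv_rhs => rw [this]
    rw [Finset.mul_sum, Finset.mul_sum, ← Finset.sum_neg_distrib, ← Finset.sum_sub_distrib,
      Finset.mul_sum, ← Finset.sum_sub_distrib]
    exact Finset.sum_congr rfl fun i _ => by ring
  rw [h4, h]
  have h5 : ⟪-x + m, m - u k⟫ = (‖x - m‖ ^ 2 + ‖u k - m‖ ^ 2 - ‖x - u k‖ ^ 2) / 2 := by linarith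
  rw [h5]
  field_simp
  ring

lemma le_exp_abs_half (r : ℝ) : Real.exp (|r| / 8) ≤ Real.exp (r / 2) + Real.exp (-(r / 2)) := by
  have h1 := Real.exp_pos (r / 2)
  have h2 := Real.exp_pos (-(r / 2))
  rcases le_or_gt 0 r with h | h
  · have : Real.exp (|r| / 8) ≤ Real.exp (r / 2) :=
      Real.exp_le_exp.2 (by rw [abs_of_nonneg h]; linarith)
    linarith
  · have : Real.exp (|r| / 8) ≤ Real.exp (-(r / 2)) :=
      Real.exp_le_exp.2 (by rw [abs_of_neg h]; linarith)
    linarith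

/-- Pairwise exponential posterior moment. -/
noncomputable def Wfun (d K : ℕ) (w : Fin K → ℝ) (μ : Fin K → EuclideanSpace ℝ (Fin d))
    (abar : ℝ) (x : EuclideanSpace ℝ (Fin d)) : ℝ :=
  ∑ i, ∑ j, postWeight d K w μ abar i x * postWeight d K w μ abar j x *
    Real.exp (‖Real.sqrt abar • μ i - Real.sqrt abar • μ j‖ ^ 2 / 8)

/-- Posterior moment of the inverse root weight. -/
noncomputable def Qfun (d K : ℕ) (w : Fin K → ℝ) (μ : Fin K → EuclideanSpace ℝ (Fin d))
    (abar : ℝ) (x : EuclideanSpace ℝ (Fin d)) : ℝ :=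
  ∑ i, postWeight d K w μ abar i x / Real.sqrt (w i)

lemma W_ge (hK : 1 ≤ K) (hw : ∀ k, 0 < w k) :
    ∑ i, postWeight d K w μ abar i x * Real.exp (‖Real.sqrt abar • μ i -
        ∑ j, postWeight d K w μ abar j x • (Real.sqrt abar • μ j)‖ ^ 2 / 8) ≤
      Wfun d K w μ abar x := by
  unfold Wfun
  have hs : ∑ k, postWeight d K w μ abar k x = 1 := post_sum hK hw
  have hn : ∀ k, 0 ≤ postWeight d K w μ abar k x := post_nonneg hw
  generalize hp : (fun k => postWeight d K w μ abar k x) = p at *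
  have hp' : ∀ k, postWeight d K w μ abar k x = p k := fun k => congrFun hp k
  simp only [hp'] at hs hn ⊢
  refine Finset.sum_le_sum fun i _ => ?_
  simp only [mul_assoc]
  rw [← Finset.mul_sum]
  refine mul_le_mul_of_nonneg_left ?_ (hn i)
  refine le_trans ?_ (jensen_exp p _ hn hs)
  apply Real.exp_le_exp.2
  have h1 := jensen_sq p (fun j => Real.sqrt abar • μ i - Real.sqrt abar • μ j) hn hs
  have h2 : ∑ j, p j • (Real.sqrt abar • μ i - Real.sqrt abar • μ j) =
      Real.sqrt abar • μ i - ∑ j, p j • (Real.sqrt abar • μ j) := by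
    simp only [smul_sub, Finset.sum_sub_distrib, ← Finset.sum_smul, hs, one_smul]
  rw [h2] at h1
  simp only [← mul_div_assoc]
  rw [← Finset.sum_div]
  linarith

lemma trace_bound (hK : 1 ≤ K) (hw : ∀ k, 0 < w k) (ha : 0 ≤ abar) (R : ℝ) (hR : 0 < R)
    (h : Wfun d K w μ abar x ≤ R ^ 3) :
    Matrix.trace (1 + gmmJac d K w μ abar x) ≤ 24 * Real.log R := by
  rw [trace_eq hK hw ha]
  have h1 := jensen_exp (fun k => postWeight d K w μ abar k x) (fun k => ‖Real.sqrt abar • μ k -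
        ∑ j, postWeight d K w μ abar j x • (Real.sqrt abar • μ j)‖ ^ 2 / 8)
        (post_nonneg hw) (post_sum hK hw)
  have h2 := (h1.trans (W_ge hK hw)).trans h
  have h3 := (Real.le_log_iff_exp_le (by positivity)).2 h2
  rw [Real.log_pow] at h3
  simp only [← mul_div_assoc] at h3
  rw [← Finset.sum_div] at h3
  push_cast at h3
  linarith

lemma post_div (hw : ∀ k, 0 < w k) (hK : 1 ≤ K) (k : Fin K) :
    Real.exp (-‖x - Real.sqrt abar • μ k‖ ^ 2 / 2 -
      Real.log (∑ i, w i * Real.exp (-‖x - Real.sqrt abar • μ i‖ ^ 2 / 2))) =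
      postWeight d K w μ abar k x / w k := by
  have hS : 0 < ∑ i, w i * Real.exp (-‖x - Real.sqrt abar • μ i‖ ^ 2 / 2) := S_pos hK hw
  rw [Real.exp_sub, Real.exp_log hS]
  unfold postWeight
  have := (hw k).ne'
  field_simp

lemma second_bound (hK : 1 ≤ K) (hw : ∀ k, 0 < w k) (hws : ∑ k, w k = 1) (R a : ℝ)
    (hR : 2 ≤ R) (h : Wfun d K w μ abar x + Qfun d K w μ abar x ≤ R ^ 3)
    (ha : 63 / 64 ≤ a) (ha1 : a ≤ 1) :
    ∑ k, postWeight d K w μ abar k x * Real.exp (-(zeta d K w μ abar a k x)) ≤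
      Real.exp (2 ^ 23 * (1 - a) ^ 2 * Real.log R ^ 2) := by
  have hs : ∑ k, postWeight d K w μ abar k x = 1 := post_sum hK hw
  have hn : ∀ k, 0 ≤ postWeight d K w μ abar k x := post_nonneg hw
  have hap : 0 < a := by linarith
  simp only [zeta_eq hK hw a hap]
  refine finite_mgf _ _ hn hs R (1 - a) hR (by linarith) (by linarith) ?_
  set ℓ : Fin K → ℝ := fun k => -‖x - Real.sqrt abar • μ k‖ ^ 2 / 2 -
      Real.log (∑ i, w i * Real.exp (-‖x - Real.sqrt abar • μ i‖ ^ 2 / 2)) with hℓ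
  set q : Fin K → ℝ := fun k => ‖Real.sqrt abar • μ k -
        ∑ j, postWeight d K w μ abar j x • (Real.sqrt abar • μ j)‖ ^ 2 with hq
  have hexp : ∀ k, Real.exp (ℓ k) = postWeight d K w μ abar k x / w k := fun k => post_div hw hK k
  have hple : ∀ k, postWeight d K w μ abar k x ≤ 1 := fun k => by
    rw [← hs]; exact Finset.single_le_sum (fun i _ => hn i) (Finset.mem_univ k)
  have hppos : ∀ k, 0 < postWeight d K w μ abar k x := fun k => by
    unfold postWeight; exact div_pos (mul_pos (hw k) (Real.exp_pos _)) (S_pos hK hw)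
  have hg : ∀ k, Real.exp (|gfun d K w μ abar a x k| / 32) ≤
      Real.exp (ℓ k / 2) + Real.exp (-(ℓ k / 2)) + Real.exp (q k / 8) := by
    intro k
    have hq0 : 0 ≤ q k := by positivity
    have hia : a⁻¹ ≤ 2 := by
      rw [inv_le_comm₀ hap (by norm_num)]; linarith
    have hia2 : (2 * a ^ 2)⁻¹ ≤ 2 := by
      rw [inv_le_comm₀ (by positivity) (by norm_num)]; nlinarith
    have hia0 : 0 < a⁻¹ := by positivity
    have hia20 : 0 < (2 * a ^ 2)⁻¹ := by positivity
    have h1 : |gfun d K w μ abar a x k| ≤ 2 * |ℓ k| + 2 * q k := by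
      have : gfun d K w μ abar a x k = a⁻¹ * ℓ k - (2 * a ^ 2)⁻¹ * q k := rfl
      rw [this]
      refine (abs_sub _ _).trans ?_
      rw [abs_mul, abs_mul, abs_of_pos hia0, abs_of_pos hia20, abs_of_nonneg hq0]
      nlinarith [abs_nonneg (ℓ k)]
    rcases le_total (|ℓ k|) (q k) with h2 | h2
    · have : Real.exp (|gfun d K w μ abar a x k| / 32) ≤ Real.exp (q k / 8) :=
        Real.exp_le_exp.2 (by linarith)
      linarith [Real.exp_pos (ℓ k / 2), Real.exp_pos (-(ℓ k / 2))]
    · have : Real.exp (|gfun d K w μ abar a x k| / 32) ≤ Real.exp (|ℓ k| / 8) :=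
        Real.exp_le_exp.2 (by linarith)
      linarith [le_exp_abs_half (ℓ k), Real.exp_pos (q k / 8)]
  have hA : ∀ k, postWeight d K w μ abar k x * Real.exp (ℓ k / 2) ≤
      postWeight d K w μ abar k x / Real.sqrt (w k) := by
    intro k
    rw [div_eq_mul_inv _ (Real.sqrt (w k)), ← Real.sqrt_inv]
    refine mul_le_mul_of_nonneg_left ?_ (hn k)
    rw [Real.exp_half, hexp]
    apply Real.sqrt_le_sqrt
    rw [div_eq_mul_inv]
    exact mul_le_of_le_one_left (inv_nonneg.2 (hw k).le) (hple k)
  have hB : ∀ k, postWeight d K w μ abar k x * Real.exp (-(ℓ k / 2)) ≤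
      postWeight d K w μ abar k x + w k := by
    intro k
    have e : Real.exp (-(ℓ k / 2)) ^ 2 = w k / postWeight d K w μ abar k x := by
      rw [← Real.exp_nat_mul, show ((2:ℕ):ℝ) * (-(ℓ k / 2)) = -ℓ k by push_cast; ring,
        Real.exp_neg, hexp, inv_div]
    have e2 : Real.exp (-(ℓ k / 2)) ≤ 1 + w k / postWeight d K w μ abar k x := by
      rw [← e]; nlinarith [sq_nonneg (Real.exp (-(ℓ k / 2)) - 1), Real.exp_pos (-(ℓ k / 2))]
    calc _ ≤ postWeight d K w μ abar k x * (1 + w k / postWeight d K w μ abar k x) :=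
          mul_le_mul_of_nonneg_left e2 (hn k)
      _ = _ := by have := (hppos k).ne'; field_simp
  calc ∑ i, postWeight d K w μ abar i x * Real.exp (|gfun d K w μ abar a x i| / 32)
      ≤ ∑ i, (postWeight d K w μ abar i x / Real.sqrt (w i) +
          (postWeight d K w μ abar i x + w i) +
          postWeight d K w μ abar i x * Real.exp (q i / 8)) := by
        refine Finset.sum_le_sum fun i _ => ?_
        have := mul_le_mul_of_nonneg_left (hg i) (hn i)
        linarith [hA i, hB i]
    _ ≤ Qfun d K w μ abar x + (1 + 1) + Wfun d K w μ abar x := by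
        rw [Finset.sum_add_distrib, Finset.sum_add_distrib, Finset.sum_add_distrib, hs, hws]
        have := W_ge (x := x) (μ := μ) (abar := abar) hK hw
        unfold Qfun
        linarith
    _ ≤ 2 * R ^ 3 := by
        have : (2:ℝ) ^ 3 ≤ R ^ 3 := pow_le_pow_left₀ (by norm_num) hR 3
        linarith

end pointwise

lemma gaussV_one (d : ℕ) (m x : EuclideanSpace ℝ (Fin d)) :
    gaussV d 1 m x = (2 * Real.pi) ^ (-(d : ℝ) / 2) * Real.exp (-‖x - m‖ ^ 2 / 2) := by
  unfold gaussV; rw [mul_one, mul_one]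

lemma gaussV_integral (d : ℕ) (m : EuclideanSpace ℝ (Fin d)) : ∫ x, gaussV d 1 m x = 1 := by
  simp only [gaussV_one]
  rw [integral_const_mul,
    integral_sub_right_eq_self (fun y : EuclideanSpace ℝ (Fin d) => Real.exp (-‖y‖ ^ 2 / 2)) m]
  have h := GaussianFourier.integral_rexp_neg_mul_sq_norm (V := EuclideanSpace ℝ (Fin d))
    (b := 1 / 2) (by norm_num)
  have e : ∀ y : EuclideanSpace ℝ (Fin d), Real.exp (-‖y‖ ^ 2 / 2) =
      Real.exp (-(1 / 2) * ‖y‖ ^ 2) := fun y => by congr 1; ring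
  simp only [e]
  rw [h, finrank_euclideanSpace_fin, show Real.pi / (1 / 2) = 2 * Real.pi by ring,
    ← Real.rpow_add (by positivity), neg_div, neg_add_cancel, Real.rpow_zero]

lemma gaussV_integrable (d : ℕ) (m : EuclideanSpace ℝ (Fin d)) : Integrable (gaussV d 1 m) := by
  apply Integrable.of_integral_ne_zero
  rw [gaussV_integral]; norm_num

lemma gaussV_nonneg (d : ℕ) (m x : EuclideanSpace ℝ (Fin d)) : 0 ≤ gaussV d 1 m x := by
  rw [gaussV_one]; positivity

lemma gaussV_cont (d : ℕ) (m : EuclideanSpace ℝ (Fin d)) : Continuous (gaussV d 1 m) := by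
  have : gaussV d 1 m = fun x => (2 * Real.pi) ^ (-(d : ℝ) / 2) * Real.exp (-‖x - m‖ ^ 2 / 2) :=
    funext fun x => gaussV_one d m x
  rw [this]; fun_prop

/-- Dominating function. -/
noncomputable def Ffun (d K : ℕ) (μ : Fin K → EuclideanSpace ℝ (Fin d))
    (abar : ℝ) (x : EuclideanSpace ℝ (Fin d)) : ℝ :=
  (∑ i, ∑ j, gaussV d 1 ((1 / 2 : ℝ) • (Real.sqrt abar • μ i + Real.sqrt abar • μ j)) x) +
    ∑ i, gaussV d 1 (Real.sqrt abar • μ i) x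

lemma F_integrable (d K : ℕ) (μ : Fin K → EuclideanSpace ℝ (Fin d)) (abar : ℝ) :
    Integrable (Ffun d K μ abar) := by
  unfold Ffun
  exact (integrable_finsetSum _ fun i _ => integrable_finsetSum _ fun j _ =>
    gaussV_integrable d _).add (integrable_finsetSum _ fun i _ => gaussV_integrable d _)

lemma F_integral (d K : ℕ) (μ : Fin K → EuclideanSpace ℝ (Fin d)) (abar : ℝ) :
    ∫ x, Ffun d K μ abar x = (K : ℝ) ^ 2 + K := by
  unfold Ffun
  rw [integral_add (integrable_finsetSum _ fun i _ => integrable_finsetSum _ fun j _ =>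
    gaussV_integrable d _) (integrable_finsetSum _ fun i _ => gaussV_integrable d _),
    integral_finsetSum _ (fun i _ => integrable_finsetSum _ fun j _ => gaussV_integrable d _),
    integral_finsetSum _ (fun i _ => gaussV_integrable d _)]
  simp_rw [integral_finsetSum _ (fun i _ => gaussV_integrable d _), gaussV_integral]
  simp [sq]

lemma F_nonneg (d K : ℕ) (μ : Fin K → EuclideanSpace ℝ (Fin d)) (abar : ℝ)
    (x : EuclideanSpace ℝ (Fin d)) : 0 ≤ Ffun d K μ abar x :=
  add_nonneg (Finset.sum_nonneg fun _ _ => Finset.sum_nonneg fun _ _ => gaussV_nonneg _ _ _)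
    (Finset.sum_nonneg fun _ _ => gaussV_nonneg _ _ _)

lemma F_cont (d K : ℕ) (μ : Fin K → EuclideanSpace ℝ (Fin d)) (abar : ℝ) :
    Continuous (Ffun d K μ abar) := by
  unfold Ffun
  exact (continuous_finsetSum _ fun i _ => continuous_finsetSum _ fun j _ => gaussV_cont d _).add
    (continuous_finsetSum _ fun i _ => gaussV_cont d _)

lemma mix_cont (d K : ℕ) (w : Fin K → ℝ) (μ : Fin K → EuclideanSpace ℝ (Fin d)) (abar : ℝ) :
    Continuous (mixDensity d K w μ abar) := by
  unfold mixDensity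
  exact continuous_finsetSum _ fun i _ => (gaussV_cont d _).const_mul _

lemma mix_integrable (d K : ℕ) (w : Fin K → ℝ) (μ : Fin K → EuclideanSpace ℝ (Fin d)) (abar : ℝ) :
    Integrable (mixDensity d K w μ abar) := by
  unfold mixDensity
  exact integrable_finsetSum _ fun i _ => (gaussV_integrable d _).const_mul _

lemma mix_integral (d K : ℕ) (w : Fin K → ℝ) (μ : Fin K → EuclideanSpace ℝ (Fin d)) (abar : ℝ) :
    ∫ x, mixDensity d K w μ abar x = ∑ k, w k := by
  unfold mixDensity
  rw [integral_finsetSum _ (fun i _ => (gaussV_integrable d _).const_mul _)]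
  simp_rw [integral_const_mul, gaussV_integral, mul_one]

lemma mix_nonneg (d K : ℕ) (w : Fin K → ℝ) (μ : Fin K → EuclideanSpace ℝ (Fin d)) (abar : ℝ)
    (hw : ∀ k, 0 < w k) (x : EuclideanSpace ℝ (Fin d)) : 0 ≤ mixDensity d K w μ abar x :=
  Finset.sum_nonneg fun k _ => mul_nonneg (hw k).le (gaussV_nonneg _ _ _)

lemma mid_exp {E : Type*} [NormedAddCommGroup E] [InnerProductSpace ℝ E] (x u v : E) :
    Real.exp (-‖x - u‖ ^ 2 / 2) * Real.exp (-‖x - v‖ ^ 2 / 2) * Real.exp (‖u - v‖ ^ 2 / 8) ^ 2 =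
      Real.exp (-‖x - (1 / 2 : ℝ) • (u + v)‖ ^ 2 / 2) ^ 2 := by
  have h := parallelogram_law_with_norm ℝ (x - u) (x - v)
  have e1 : x - u + (x - v) = (2:ℝ) • (x - (1 / 2 : ℝ) • (u + v)) := by
    rw [smul_sub, smul_smul, two_smul]; norm_num; abel
  have e2 : x - u - (x - v) = -(u - v) := by abel
  rw [e1, e2, norm_neg, norm_smul, Real.norm_eq_abs, abs_of_pos (by norm_num : (0:ℝ) < 2)] at h
  rw [← Real.exp_nat_mul, ← Real.exp_nat_mul, ← Real.exp_add, ← Real.exp_add]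
  congr 1
  push_cast
  nlinarith

lemma dom (d K : ℕ) (hK : 1 ≤ K) (w : Fin K → ℝ) (μ : Fin K → EuclideanSpace ℝ (Fin d)) (abar : ℝ)
    (hw : ∀ k, 0 < w k) (hw1 : ∀ k, w k ≤ 1) (x : EuclideanSpace ℝ (Fin d)) :
    mixDensity d K w μ abar x * (Wfun d K w μ abar x + Qfun d K w μ abar x) ≤
      Ffun d K μ abar x := by
  have hS : 0 < ∑ i, w i * Real.exp (-‖x - Real.sqrt abar • μ i‖ ^ 2 / 2) := S_pos hK hw
  have hle : ∀ k, w k * Real.exp (-‖x - Real.sqrt abar • μ k‖ ^ 2 / 2) ≤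
      ∑ i, w i * Real.exp (-‖x - Real.sqrt abar • μ i‖ ^ 2 / 2) := fun k =>
    Finset.single_le_sum (f := fun i => w i * Real.exp (-‖x - Real.sqrt abar • μ i‖ ^ 2 / 2))
      (fun i _ => mul_nonneg (hw i).le (Real.exp_pos _).le) (Finset.mem_univ k)
  have hmix : mixDensity d K w μ abar x = (2 * Real.pi) ^ (-(d : ℝ) / 2) *
      ∑ i, w i * Real.exp (-‖x - Real.sqrt abar • μ i‖ ^ 2 / 2) := by
    unfold mixDensity
    rw [Finset.mul_sum]
    exact Finset.sum_congr rfl fun i _ => by rw [gaussV_one]; ring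
  have hF : Ffun d K μ abar x = (2 * Real.pi) ^ (-(d : ℝ) / 2) *
      ((∑ i, ∑ j, Real.exp (-‖x - (1 / 2 : ℝ) • (Real.sqrt abar • μ i + Real.sqrt abar • μ j)‖ ^ 2 / 2))
        + ∑ i, Real.exp (-‖x - Real.sqrt abar • μ i‖ ^ 2 / 2)) := by
    unfold Ffun
    simp only [gaussV_one, mul_add, Finset.mul_sum]
  rw [hmix, hF, mul_assoc]
  refine mul_le_mul_of_nonneg_left ?_ (by positivity)
  unfold Wfun Qfun postWeight
  generalize (∑ i, w i * Real.exp (-‖x - Real.sqrt abar • μ i‖ ^ 2 / 2)) = S at hS hle ⊢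
  rw [mul_add, Finset.mul_sum, Finset.mul_sum]
  refine add_le_add (Finset.sum_le_sum fun i _ => ?_) (Finset.sum_le_sum fun i _ => ?_)
  · rw [Finset.mul_sum]
    refine Finset.sum_le_sum fun j _ => ?_
    have hm := mid_exp x (Real.sqrt abar • μ i) (Real.sqrt abar • μ j)
    have hi := hle i
    have hj := hle j
    have e1 := Real.exp_pos (-‖x - Real.sqrt abar • μ i‖ ^ 2 / 2)
    have e2 := Real.exp_pos (-‖x - Real.sqrt abar • μ j‖ ^ 2 / 2)
    have e3 := Real.exp_pos (‖Real.sqrt abar • μ i - Real.sqrt abar • μ j‖ ^ 2 / 8)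
    have e4 := Real.exp_pos (-‖x - (1 / 2 : ℝ) • (Real.sqrt abar • μ i + Real.sqrt abar • μ j)‖ ^ 2 / 2)
    generalize Real.exp (-‖x - Real.sqrt abar • μ i‖ ^ 2 / 2) = ei at *
    generalize Real.exp (-‖x - Real.sqrt abar • μ j‖ ^ 2 / 2) = ej at *
    generalize Real.exp (‖Real.sqrt abar • μ i - Real.sqrt abar • μ j‖ ^ 2 / 8) = E at *
    generalize Real.exp (-‖x - (1 / 2 : ℝ) • (Real.sqrt abar • μ i + Real.sqrt abar • μ j)‖ ^ 2 / 2) = m at *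
    have wi := hw i
    have wj := hw j
    have key : w i * ei * (w j * ej) * E ≤ S * m := by
      refine (pow_le_pow_iff_left₀ (by positivity) (by positivity) two_ne_zero).1 ?_
      calc (w i * ei * (w j * ej) * E) ^ 2 = (w i * ei * (w j * ej)) * (w i * w j * (ei * ej * E ^ 2)) := by
            ring
        _ ≤ (S * S) * (1 * 1 * m ^ 2) := by
            rw [hm]
            have := hw1 i
            have := hw1 j
            gcongr
        _ = (S * m) ^ 2 := by ring
    have e : S * (w i * ei / S * (w j * ej / S) * E) = w i * ei * (w j * ej) * E / S := by
      field_simp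
    rw [e, div_le_iff₀ hS]
    linarith
  · have wi := hw i
    have hsq : 0 < Real.sqrt (w i) := Real.sqrt_pos.2 wi
    have h1 : Real.sqrt (w i) ≤ 1 := Real.sqrt_le_iff.2 ⟨zero_le_one, by rw [one_pow]; exact hw1 i⟩
    have h2 : Real.sqrt (w i) * Real.sqrt (w i) = w i := Real.mul_self_sqrt wi.le
    have e1 := Real.exp_pos (-‖x - Real.sqrt abar • μ i‖ ^ 2 / 2)
    generalize Real.exp (-‖x - Real.sqrt abar • μ i‖ ^ 2 / 2) = ei at *
    have e : S * (w i * ei / S / Real.sqrt (w i)) = Real.sqrt (w i) * ei := by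
      field_simp
      rw [sq, h2]
    rw [e]
    exact mul_le_of_le_one_left e1.le h1

lemma core (d K T : ℕ) (hK : 2 ≤ K) (hT : 1 ≤ T) (w : Fin K → ℝ)
    (μ : Fin K → EuclideanSpace ℝ (Fin d)) (abar a C₁ C₂ : ℝ)
    (hw : ∀ k, 0 < w k) (hw1 : ∀ k, w k ≤ 1) (hws : ∑ k, w k = 1) (hab : 0 ≤ abar)
    (ha : 63 / 64 ≤ a) (ha1 : a ≤ 1) (hC1 : 24 ≤ C₁) (hC2 : 2 ^ 23 ≤ C₂) :
    (∫ x in (Eset d K T w μ abar a C₁ C₂)ᶜ, mixDensity d K w μ abar x) ≤ 2 / (T : ℝ) ^ 3 := by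
  have hKr : (2:ℝ) ≤ K := by exact_mod_cast hK
  have hTr : (1:ℝ) ≤ T := by exact_mod_cast hT
  set B : ℝ := (K:ℝ) ^ 2 * (T:ℝ) ^ 3 with hB
  have hBpos : 0 < B := by positivity
  set S : Set (EuclideanSpace ℝ (Fin d)) :=
    {x | B * mixDensity d K w μ abar x ≤ Ffun d K μ abar x} with hSdef
  have hSm : MeasurableSet S :=
    (isClosed_le ((mix_cont d K w μ abar).const_mul B) (F_cont d K μ abar)).measurableSet
  have hR : (2:ℝ) ≤ (K:ℝ) * T := by nlinarith
  have hlog : 0 ≤ Real.log ((K:ℝ) * T) := Real.log_nonneg (by linarith)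
  have hsub : (Eset d K T w μ abar a C₁ C₂)ᶜ ⊆ S := by
    intro x hx
    by_contra hxS
    apply hx
    have hlt : Ffun d K μ abar x < B * mixDensity d K w μ abar x := not_le.1 hxS
    have hdom := dom d K (by omega) w μ abar hw hw1 x
    have hmn : 0 ≤ mixDensity d K w μ abar x := mix_nonneg d K w μ abar hw x
    have hWQ : Wfun d K w μ abar x + Qfun d K w μ abar x ≤ ((K:ℝ) * T) ^ 3 := by
      have h1 : Wfun d K w μ abar x + Qfun d K w μ abar x ≤ B := by
        by_contra hcon
        have := mul_le_mul_of_nonneg_left (not_le.1 hcon).le hmn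
        linarith
      refine h1.trans ?_
      rw [hB, mul_pow]
      exact mul_le_mul_of_nonneg_right (pow_le_pow_right₀ (by linarith) (by norm_num)) (by positivity)
    have hQ : 0 ≤ Qfun d K w μ abar x :=
      Finset.sum_nonneg fun i _ => div_nonneg (post_nonneg hw i) (Real.sqrt_nonneg _)
    refine ⟨?_, ?_⟩
    · refine (trace_bound (by omega) hw hab ((K:ℝ) * T) (by linarith) (by linarith)).trans ?_
      exact mul_le_mul_of_nonneg_right hC1 hlog
    · refine (second_bound (by omega) hw hws _ a hR hWQ ha ha1).trans ?_
      apply Real.exp_le_exp.2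
      gcongr
  calc (∫ x in (Eset d K T w μ abar a C₁ C₂)ᶜ, mixDensity d K w μ abar x)
      ≤ ∫ x in S, mixDensity d K w μ abar x :=
        setIntegral_mono_set (mix_integrable d K w μ abar).integrableOn
          (Filter.Eventually.of_forall fun x => mix_nonneg d K w μ abar hw x) hsub.eventuallyLE
    _ ≤ ∫ x in S, Ffun d K μ abar x / B :=
        setIntegral_mono_on (mix_integrable d K w μ abar).integrableOn
          ((F_integrable d K μ abar).div_const B).integrableOn hSm fun x hx => by
            rw [le_div_iff₀ hBpos, mul_comm]; exact hx
    _ ≤ ∫ x, Ffun d K μ abar x / B :=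
        setIntegral_le_integral ((F_integrable d K μ abar).div_const B)
          (Filter.Eventually.of_forall fun x => div_nonneg (F_nonneg d K μ abar x) hBpos.le)
    _ = ((K:ℝ) ^ 2 + K) / B := by rw [integral_div, F_integral]
    _ ≤ 2 / (T:ℝ) ^ 3 := by
        rw [hB, div_le_div_iff₀ (by positivity) (by positivity)]
        have : 0 < (T:ℝ) ^ 3 := by positivity
        nlinarith [mul_nonneg (mul_nonneg (by linarith : (0:ℝ) ≤ K) (by linarith : (0:ℝ) ≤ (K:ℝ) - 1)) this.le]

lemma large_T (c₀ c₁ : ℝ) (hc : 4 * c₀ < c₁) :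
    ∃ N : ℕ, ∀ T : ℕ, N ≤ T → 2 ≤ T ∧ c₁ * (Real.log T / T) ≤ 1 / 64 ∧
      64 ≤ (T:ℝ) ^ (c₁ / 4 - c₀) := by
  have h1 : Filter.Tendsto (fun T : ℕ => c₁ * (Real.log T / T)) Filter.atTop (nhds (c₁ * 0)) := by
    have := Real.isLittleO_log_id_atTop.tendsto_div_nhds_zero
    exact (this.comp tendsto_natCast_atTop_atTop).const_mul c₁
  rw [mul_zero] at h1
  have h2 : Filter.Tendsto (fun T : ℕ => (T:ℝ) ^ (c₁ / 4 - c₀)) Filter.atTop Filter.atTop :=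
    (tendsto_rpow_atTop (by linarith)).comp tendsto_natCast_atTop_atTop
  have h := (Filter.eventually_ge_atTop 2).and
    ((h1.eventually (ge_mem_nhds (by norm_num : (0:ℝ) < 1 / 64))).and
      (h2.eventually_ge_atTop 64))
  exact Filter.eventually_atTop.1 h

/-- Lemma 5. For sufficiently large absolute constants `C₁, C₂` in the
definition of `E_t`, there exists an absolute constant `C > 0` such that for every
`t ∈ [T]`, `∫_{E_t^c} p_{X_t^GMM}(x) dx ≤ C T^{−3}`. -/
theorem stmt7 :
    ∀ cR : ℝ, 0 < cR →
      ∃ c₀₀ c₁₀ C₁₀ C₂₀ : ℝ, 0 < c₀₀ ∧ 0 < c₁₀ ∧ 0 < C₁₀ ∧ 0 < C₂₀ ∧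
        ∀ c₀ c₁ C₁ C₂ : ℝ, c₀₀ ≤ c₀ → c₁₀ ≤ c₁ → C₁₀ ≤ C₁ → C₂₀ ≤ C₂ → 4 < c₁ / c₀ →
          ∃ C : ℝ, 0 < C ∧
            ∀ (d K T : ℕ), 1 ≤ d → 1 ≤ K → 1 ≤ T →
              ∀ (w : Fin K → ℝ) (μ : Fin K → EuclideanSpace ℝ (Fin d)),
                (∀ k, w k ∈ Set.Ioo (0 : ℝ) 1) → (∑ k, w k = 1) →
                (∀ k, ‖μ k‖ ≤ (T : ℝ) ^ cR) →
                ∀ (αbar α : ℕ → ℝ),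
                  αbar T = (T : ℝ) ^ (-c₀) →
                  (∀ t : ℕ, 2 ≤ t → t ≤ T →
                    αbar (t - 1) = αbar t + c₁ * (Real.log T / T) * αbar t * (1 - αbar t)) →
                  (∀ t : ℕ, 2 ≤ t → t ≤ T → α t = αbar t / αbar (t - 1)) →
                  α 1 = αbar 1 →
                  ∀ t : ℕ, 1 ≤ t → t ≤ T →
                    (∫ x in (Eset d K T w μ (αbar t) (α t) C₁ C₂)ᶜ,
                        mixDensity d K w μ (αbar t) x) ≤
                      C / (T : ℝ) ^ 3 := by
  intro cR _
  refine ⟨1, 1, 24, 2 ^ 23, by norm_num, by norm_num, by norm_num, by norm_num, ?_⟩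
  intro c₀ c₁ C₁ C₂ hc0 hc1 hC1 hC2 hcc
  have hc0p : 0 < c₀ := by linarith
  rw [lt_div_iff₀ hc0p] at hcc
  obtain ⟨N, hN⟩ := large_T c₀ c₁ hcc
  refine ⟨2 + (N:ℝ) ^ 3, by positivity, ?_⟩
  intro d K T _ hK hT w μ hw hws _ αbar α hT0 hrec hα hα1 t ht1 htT
  have hwp : ∀ k, 0 < w k := fun k => (hw k).1
  have hwl : ∀ k, w k ≤ 1 := fun k => (hw k).2.le
  have hTr : (1:ℝ) ≤ T := by exact_mod_cast hT
  have hK2 : 2 ≤ K := by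
    by_contra hcon
    obtain rfl : K = 1 := by omega
    have := (hw 0).2
    simp at hws
    linarith
  rcases lt_or_ge T N with hlt | hge
  · have h1 : (∫ x in (Eset d K T w μ (αbar t) (α t) C₁ C₂)ᶜ, mixDensity d K w μ (αbar t) x) ≤ 1 := by
      rw [← hws, ← mix_integral d K w μ (αbar t)]
      exact setIntegral_le_integral (mix_integrable d K w μ _)
        (Filter.Eventually.of_forall fun x => mix_nonneg d K w μ _ hwp x)
    refine h1.trans ?_
    rw [le_div_iff₀ (by positivity), one_mul]
    have : (T:ℝ) ^ 3 ≤ (N:ℝ) ^ 3 := pow_le_pow_left₀ (by positivity) (by exact_mod_cast hlt.le) 3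
    linarith
  · obtain ⟨hT2, hx64, hbig⟩ := hN T hge
    have hT2r : (2:ℝ) ≤ T := by exact_mod_cast hT2
    have hTpos : (0:ℝ) < T := by linarith
    set X : ℝ := c₁ * (Real.log T / T) with hX
    have hlogT : 0 ≤ Real.log T := Real.log_nonneg hTr
    have hX0 : 0 ≤ X := by
      have : 0 ≤ c₁ := by linarith
      positivity
    have hb0 : 0 < αbar T := by rw [hT0]; positivity
    have hb1 : αbar T ≤ 1 := by
      rw [hT0]; exact Real.rpow_le_one_of_one_le_of_nonpos hTr (by linarith)
    have hsch := schedule T X (αbar T) hX0 (by linarith) αbar hb0 hb1 le_rfl hb0.le hrec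
    have hrange : ∀ s, 1 ≤ s → s ≤ T → 0 < αbar s ∧ αbar s ≤ 1 := by
      intro s hs1 hs2
      have := hsch (T - s) (by omega)
      rw [show T - (T - s) = s by omega] at this
      exact ⟨this.1, this.2.1⟩
    have hα_bounds : 63 / 64 ≤ α t ∧ α t ≤ 1 := by
      rcases Nat.lt_or_ge t 2 with h | h
      · obtain rfl : t = 1 := by omega
        rw [hα1]
        refine ⟨?_, (hrange 1 le_rfl hT).2⟩
        have h3 := (hsch (T - 1) (by omega)).2.2
        rw [show T - (T - 1) = 1 by omega] at h3
        obtain ⟨g1, g2⟩ := hrange 1 le_rfl hT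
        have hexp : Real.exp (X / 2) ≤ 1 + X := by
          have k1 : 1 - X / 2 ≤ Real.exp (-(X / 2)) := by
            linarith [Real.add_one_le_exp (-(X / 2))]
          have k2 : Real.exp (-(X / 2)) * Real.exp (X / 2) = 1 := by rw [← Real.exp_add]; simp
          have k3 : (1 - X / 2) * Real.exp (X / 2) ≤ 1 :=
            (mul_le_mul_of_nonneg_right k1 (Real.exp_pos _).le).trans_eq k2
          have k4 : (1 - X / 2) * Real.exp (X / 2) ≤ (1 - X / 2) * (1 + X) := by nlinarith
          exact le_of_mul_le_mul_left k4 (by linarith)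
        have hpow : (T:ℝ) ^ (c₁ / 4) ≤ (1 + X) ^ (T - 1) := by
          calc (T:ℝ) ^ (c₁ / 4) ≤ Real.exp (X / 2) ^ (T - 1) := by
                rw [← Real.exp_nat_mul, Real.rpow_def_of_pos hTpos]
                apply Real.exp_le_exp.2
                rw [Nat.cast_sub hT, Nat.cast_one]
                have e : X * T = c₁ * Real.log T := by rw [hX]; field_simp
                nlinarith
            _ ≤ _ := pow_le_pow_left₀ (Real.exp_pos _).le hexp _
        have h64 : 64 ≤ αbar T * (1 + X) ^ (T - 1) := by
          refine hbig.trans ?_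
          rw [hT0, sub_eq_neg_add, Real.rpow_add hTpos]
          exact mul_le_mul_of_nonneg_left hpow (by positivity)
        have := mul_le_mul_of_nonneg_right h64 (by linarith : 0 ≤ 1 - αbar 1)
        linarith
      · obtain ⟨g1, g2⟩ := hrange t ht1 htT
        have hr := hrec t h htT
        have hpos : 0 < αbar (t - 1) := (hrange (t - 1) (by omega) (by omega)).1
        rw [hα t h htT]
        have k1 : 0 ≤ X * αbar t * (1 - αbar t) := by
          have : 0 ≤ 1 - αbar t := by linarith
          positivity
        have k2 : X * αbar t * (1 - αbar t) ≤ 1 / 64 * αbar t := by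
          have : X * αbar t ≤ 1 / 64 * αbar t := mul_le_mul_of_nonneg_right hx64 g1.le
          nlinarith [mul_nonneg hX0 g1.le]
        constructor
        · rw [le_div_iff₀ hpos, hr]; linarith
        · rw [div_le_one hpos, hr]; linarith
    refine (core d K T hK2 hT w μ (αbar t) (α t) C₁ C₂ hwp hwl hws (hrange t ht1 htT).1.le
      hα_bounds.1 hα_bounds.2 hC1 hC2).trans ?_
    have : (0:ℝ) ≤ (N:ℝ) ^ 3 := by positivity
    exact div_le_div_of_nonneg_right (by linarith) (by positivity)
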